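/- Let K ⊂ ℝ² be a plane convex body of constant width, i.e., such that the difference body K − K is a Euclidean disk. Then K satisfies the translative constant volume property. -/

import Mathlib

open MeasureTheory Set Pointwise Metric

/-- A convex body: a compact convex set with nonempty interior. -/
def IsConvexBody {n : ℕ} (K : Set (EuclideanSpace ℝ (Fin n))) : Prop :=
  IsCompact K ∧ Convex ℝ K ∧ (interior K).Nonempty

/-- Two sets touch each other if they intersect and their interiors are disjoint. -/
def Touching {n : ℕ} (A B : Set (EuclideanSpace ℝ (Fin n))) : Prop :=
  (A ∩ B).Nonempty ∧ interior A ∩ interior B = ∅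

/-- The translative constant volume property. -/
def TCVP {n : ℕ} (K : Set (EuclideanSpace ℝ (Fin n))) : Prop :=
  ∃ c : ℝ, ∀ v w : EuclideanSpace ℝ (Fin n), Touching (v +ᵥ K) (w +ᵥ K) →
    (volume (convexHull ℝ ((v +ᵥ K) ∪ (w +ᵥ K)))).toReal = c

lemma slice_add (S : Set ℝ) (hc : IsCompact S) (hv : Convex ℝ S) (d : ℝ) (hd : 0 ≤ d)
    (hne : S.Nonempty) : volume (S + Icc 0 d) = volume S + ENNReal.ofReal d := by
  have hS : S = Icc (sInf S) (sSup S) :=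
    eq_Icc_of_connected_compact ⟨hne, hv.isPreconnected⟩ hc
  have hle : sInf S ≤ sSup S := Real.sInf_le_sSup S hc.bddBelow hc.bddAbove
  generalize sInf S = a at *
  generalize sSup S = b at *
  subst hS
  rw [Set.Icc_add_Icc hle hd, Real.volume_Icc, Real.volume_Icc,
    ← ENNReal.ofReal_add (by linarith) hd]
  congr 1; ring

lemma prod_add (L : Set (ℝ × ℝ)) (hc : IsCompact L) (hv : Convex ℝ L) (d : ℝ) (hd : 0 ≤ d) :
    volume (L + Icc 0 d ×ˢ {(0:ℝ)}) =
      volume L + ENNReal.ofReal d * volume (Prod.snd '' L) := by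
  have hc2 : IsCompact (L + Icc 0 d ×ˢ {(0:ℝ)}) :=
    hc.add (isCompact_Icc.prod isCompact_singleton)
  have hps : MeasurableSet (Prod.snd '' L) := (hc.image continuous_snd).measurableSet
  rw [Measure.volume_eq_prod, Measure.prod_apply_symm hc2.measurableSet,
    Measure.prod_apply_symm hc.measurableSet,
    ← lintegral_indicator_const hps, ← lintegral_add_right _ (measurable_const.indicator hps)]
  refine lintegral_congr fun y => ?_
  have hsl : (fun x => (x, y)) ⁻¹' (L + Icc 0 d ×ˢ {(0:ℝ)}) =
      ((fun x => (x, y)) ⁻¹' L) + Icc 0 d := by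
    ext x
    simp only [mem_preimage, Set.mem_add, mem_prod, mem_singleton_iff, Prod.exists, Prod.mk_add_mk,
      Prod.mk.injEq]
    constructor
    · rintro ⟨a, b, h1, e, f, ⟨h2, rfl⟩, h3, h4⟩
      obtain rfl : b = y := by simpa using h4
      exact ⟨a, h1, e, h2, h3⟩
    · rintro ⟨a, h1, e, h2, h3⟩
      exact ⟨a, y, h1, e, 0, ⟨h2, rfl⟩, h3, by simp⟩
  rw [hsl]
  by_cases hy : y ∈ Prod.snd '' L
  · rw [indicator_of_mem hy]
    refine slice_add _ ?_ ?_ d hd ?_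
    · have : (fun x => (x, y)) ⁻¹' L = Prod.fst '' (L ∩ Prod.snd ⁻¹' {y}) := by
        ext x; simp
      rw [this]
      exact (hc.inter_right (isClosed_singleton.preimage continuous_snd)).image continuous_fst
    · intro a ha b hb s t hs ht hst
      have := hv ha hb hs ht hst
      simp only [mem_preimage]
      convert this using 1
      ext <;> simp
      rw [← add_mul, hst, one_mul]
    · obtain ⟨⟨x, y'⟩, h1, rfl⟩ := hy
      exact ⟨x, h1⟩
  · rw [indicator_of_notMem hy]
    have : (fun x => (x, y)) ⁻¹' L = ∅ := by
      ext x
      simp only [mem_preimage, mem_empty_iff_false, iff_false]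
      exact fun hx => hy ⟨_, hx, rfl⟩
    rw [this]; simp

lemma touch_norm (K : Set (EuclideanSpace ℝ (Fin 2))) (hK : IsConvexBody K) (r : ℝ) (hr : 0 < r)
    (h : K - K = Metric.closedBall 0 r) (v w : EuclideanSpace ℝ (Fin 2))
    (ht : Touching (v +ᵥ K) (w +ᵥ K)) : ‖w - v‖ = r := by
  obtain ⟨⟨x, ⟨k, hk, rfl⟩, ⟨k', hk', h2⟩⟩, hdis⟩ := ht
  simp only [vadd_eq_add] at h2
  apply le_antisymm
  · have : k - k' ∈ K - K := Set.sub_mem_sub hk hk'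
    rw [h, mem_closedBall_zero_iff] at this
    have e : w - v = k - k' := by
      rw [sub_eq_sub_iff_add_eq_add, h2, add_comm]
    rwa [e]
  · by_contra! hlt
    obtain ⟨c, hc⟩ := hK.2.2
    set l : ℝ := (‖w - v‖ / r + 1) / 2 with hl
    have h0 : 0 ≤ ‖w - v‖ / r := by positivity
    have h1 : ‖w - v‖ / r < 1 := by rwa [div_lt_one hr]
    have hl0 : 0 < l := by linarith
    have hl1 : l < 1 := by linarith
    have hmem : l⁻¹ • (w - v) ∈ K - K := by
      rw [h, mem_closedBall_zero_iff, norm_smul, norm_inv, Real.norm_of_nonneg hl0.le,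
        inv_mul_le_iff₀ hl0, ← div_le_iff₀ hr]
      linarith
    obtain ⟨p, hp, q, hq, hpq⟩ := hmem
    have hpq : p - q = l⁻¹ • (w - v) := hpq
    have key : ∀ p ∈ K, l • p + (1 - l) • c ∈ interior K := fun p hp =>
      hK.2.1.combo_self_interior_mem_interior hp hc hl0.le (by linarith) (by ring)
    have hvi : ∀ u : EuclideanSpace ℝ (Fin 2), interior (u +ᵥ K) = u +ᵥ interior K :=
      fun u => interior_vadd u K
    have : v + (l • p + (1 - l) • c) ∈ interior (v +ᵥ K) ∩ interior (w +ᵥ K) := by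
      rw [hvi, hvi]
      refine ⟨⟨_, key p hp, rfl⟩, ⟨_, key q hq, ?_⟩⟩
      have : l • p - l • q = w - v := by
        rw [← smul_sub, hpq, smul_inv_smul₀ hl0.ne']
      simp only [vadd_eq_add]
      have hw : w = v + (l • p - l • q) := by rw [this]; abel
      rw [hw]; abel
    rw [hdis] at this
    exact this

lemma hull_eq (K : Set (EuclideanSpace ℝ (Fin 2))) (hK : Convex ℝ K)
    (v w : EuclideanSpace ℝ (Fin 2)) :
    convexHull ℝ ((v +ᵥ K) ∪ (w +ᵥ K)) =
      v +ᵥ (K + (fun s : ℝ => s • (w - v)) '' Icc 0 1) := by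
  apply Subset.antisymm
  · apply convexHull_min
    · rintro x (⟨k, hk, rfl⟩ | ⟨k, hk, rfl⟩)
      · exact ⟨k, ⟨k, hk, 0, ⟨0, by simp, by simp⟩, by simp⟩, rfl⟩
      · refine ⟨k + (w - v), ⟨k, hk, w - v, ⟨1, by simp, by simp⟩, rfl⟩, ?_⟩
        simp only [vadd_eq_add]; abel
    · apply Convex.vadd
      apply hK.add
      exact (convex_Icc (0:ℝ) 1).is_linear_image ⟨fun _ _ => add_smul _ _ _, fun _ _ => by simp [mul_smul]⟩
  · rintro _ ⟨_, ⟨k, hk, _, ⟨s, ⟨hs0, hs1⟩, rfl⟩, rfl⟩, rfl⟩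
    have := (convex_convexHull ℝ ((v +ᵥ K) ∪ (w +ᵥ K)))
      (subset_convexHull ℝ _ (Or.inl ⟨k, hk, rfl⟩)) (subset_convexHull ℝ _ (Or.inr ⟨k, hk, rfl⟩))
      (sub_nonneg.2 hs1) hs0 (by ring)
    convert this using 1
    simp only [vadd_eq_add]
    module

lemma vol_eq (K : Set (EuclideanSpace ℝ (Fin 2))) (hK : IsConvexBody K) (r : ℝ) (hr : 0 < r)
    (h : K - K = Metric.closedBall 0 r) (t : EuclideanSpace ℝ (Fin 2)) (ht : ‖t‖ = r) :
    volume (K + (fun s : ℝ => s • t) '' Icc 0 1) =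
      volume K + ENNReal.ofReal r * ENNReal.ofReal r := by
  obtain ⟨b, hb⟩ : ∃ b : OrthonormalBasis (Fin 2) ℝ (EuclideanSpace ℝ (Fin 2)),
      b 0 = r⁻¹ • t := by
    have ho : Orthonormal ℝ (({0} : Set (Fin 2)).domRestrict (fun _ => r⁻¹ • t)) := by
      constructor
      · intro i
        change ‖r⁻¹ • t‖ = 1
        rw [norm_smul, norm_inv, Real.norm_of_nonneg hr.le, ht, inv_mul_cancel₀ hr.ne']
      · intro i j hij
        exact absurd (Subsingleton.elim i j) hij
    obtain ⟨b, hb⟩ := ho.exists_orthonormalBasis_extension_of_card_eq (by simp)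
    exact ⟨b, hb 0 rfl⟩
  let φ : EuclideanSpace ℝ (Fin 2) →ₗ[ℝ] ℝ × ℝ :=
    { toFun := fun x => (b.repr x 0, b.repr x 1)
      map_add' := by intros; simp
      map_smul' := by intros; simp }
  have hφ : ∀ x, φ x = (b.repr x 0, b.repr x 1) := fun _ => rfl
  have hmp : MeasurePreserving φ volume volume :=
    ((volume_preserving_finTwoArrow ℝ).comp
      (PiLp.volume_preserving_ofLp (Fin 2))).comp b.measurePreserving_repr
  have hinj : Function.Injective φ := by
    intro x y hxy
    simp only [hφ, Prod.mk.injEq] at hxy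
    apply b.repr.injective
    ext i; fin_cases i
    · exact hxy.1
    · exact hxy.2
  have hcont : Continuous φ := φ.continuous_of_finiteDimensional
  have hvol : ∀ S, IsCompact S → volume S = volume (φ '' S) := by
    intro S hS
    rw [← hmp.measure_preimage (hS.image hcont).measurableSet.nullMeasurableSet,
      hinj.preimage_image]
  have hseg : IsCompact ((fun s : ℝ => s • t) '' Icc 0 1) :=
    isCompact_Icc.image (by fun_prop)
  have htb : t = r • b 0 := by rw [hb, smul_inv_smul₀ hr.ne']
  have hφt : φ t = (r, 0) := by
    rw [hφ, htb]; simp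
  have hsegim : φ '' ((fun s : ℝ => s • t) '' Icc 0 1) = Icc 0 r ×ˢ {(0:ℝ)} := by
    ext ⟨x, y⟩
    simp only [image_image, map_smul, hφt, mem_image, mem_prod, mem_singleton_iff, Prod.smul_mk,
      smul_eq_mul, mul_zero, Prod.mk.injEq, mem_Icc]
    constructor
    · rintro ⟨s, ⟨h0, h1⟩, rfl, rfl⟩
      exact ⟨⟨by positivity, by nlinarith⟩, rfl⟩
    · rintro ⟨⟨h0, h1⟩, rfl⟩
      exact ⟨x / r, ⟨by positivity, by rwa [div_le_one hr]⟩, by field_simp, rfl⟩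
  rw [hvol _ (hK.1.add hseg), Set.image_add, hsegim,
    prod_add _ (hK.1.image hcont) (hK.2.1.linear_image φ) r hr.le, ← hvol _ hK.1]
  congr 2
  have hne : K.Nonempty := hK.2.2.mono interior_subset
  have hcS : IsCompact (Prod.snd '' (φ '' K)) := (hK.1.image hcont).image continuous_snd
  have hvS : Convex ℝ (Prod.snd '' (φ '' K)) :=
    (hK.2.1.linear_image φ).linear_image (LinearMap.snd ℝ ℝ ℝ)
  have hneS : (Prod.snd '' (φ '' K)).Nonempty := (hne.image _).image _
  have hS := eq_Icc_of_connected_compact ⟨hneS, hvS.isPreconnected⟩ hcS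
  have hmin := hcS.sInf_mem hneS
  have hmax := hcS.sSup_mem hneS
  generalize sInf (Prod.snd '' (φ '' K)) = a at *
  generalize sSup (Prod.snd '' (φ '' K)) = c at *
  rw [hS, Real.volume_Icc]
  congr 1
  apply le_antisymm
  · obtain ⟨_, ⟨p, hp, rfl⟩, rfl⟩ := hmin
    obtain ⟨_, ⟨q, hq, rfl⟩, rfl⟩ := hmax
    have h1 : q - p ∈ K - K := Set.sub_mem_sub hq hp
    rw [h, mem_closedBall_zero_iff] at h1
    have h2 : (φ q).2 - (φ p).2 = b.repr (q - p) 1 := by simp [hφ]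
    rw [h2]
    calc b.repr (q - p) 1 ≤ ‖b.repr (q - p) 1‖ := Real.le_norm_self _
      _ ≤ ‖b.repr (q - p)‖ := PiLp.norm_apply_le _ _
      _ = ‖q - p‖ := b.repr.norm_map _
      _ ≤ r := h1
  · have h1 : r • b 1 ∈ K - K := by
      rw [h, mem_closedBall_zero_iff, norm_smul, b.norm_eq_one, Real.norm_of_nonneg hr.le, mul_one]
    obtain ⟨p, hp, q, hq, hpq⟩ := h1
    have hpq : p - q = r • b 1 := hpq
    have h2 : (φ p).2 - (φ q).2 = r := by
      have : (φ p).2 - (φ q).2 = b.repr (p - q) 1 := by simp [hφ]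
      rw [this, hpq]; simp
    have h3 : (φ p).2 ∈ Icc a c := hS ▸ ⟨_, ⟨p, hp, rfl⟩, rfl⟩
    have h4 : (φ q).2 ∈ Icc a c := hS ▸ ⟨_, ⟨q, hq, rfl⟩, rfl⟩
    linarith [h3.2, h4.1]

theorem stmt8 (K : Set (EuclideanSpace ℝ (Fin 2))) (hK : IsConvexBody K)
    (h : ∃ r : ℝ, 0 < r ∧ K - K = Metric.closedBall 0 r) :
    TCVP K := by
  obtain ⟨r, hr, h⟩ := h
  refine ⟨(volume K + ENNReal.ofReal r * ENNReal.ofReal r).toReal, fun v w ht => ?_⟩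
  rw [hull_eq K hK.2.1 v w, measure_vadd,
    vol_eq K hK r hr h (w - v) (touch_norm K hK r hr h v w ht)]
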